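/- Let p ≥ 2 be an integer, η > 0, (c_k)_{k≥1} complex numbers and (φ_k)_{k≥1} real numbers. Assume: Σ_{k=1}^∞ |c_k| < ∞; for every j = 1,…,p−1, Σ_{k_1,…,k_j=1}^∞ |c_{k_1} ⋯ c_{k_j} h_j(η; φ_{k_1},…,φ_{k_j})| < ∞; Kη ≠ ε_1 φ_{k_1} + ⋯ + ε_J φ_{k_J} for all integers 1 ≤ K ≤ J ≤ p, all indices k_1,…,k_J ≥ 1 and all signs ε_i ∈ {+1,−1}; and there is an involution k ↦ k* of the index set with c_{k*} = conj(c_k) and φ_{k*} = −φ_k. Then E_{J,K} := Σ_{m_1,…,m_J=1}^∞ |c_{m_1} ⋯ c_{m_J} g_{J,K}(η; φ_{m_1},…,φ_{m_J})| is finite whenever 1 ≤ K ≤ J ≤ p−1, and 𝓔_{J,0} := Σ_{m_1,…,m_J=1}^∞ |c_{m_1} ⋯ c_{m_J} 𝒢_{J,0}(η; φ_{m_1},…,φ_{m_J})| is finite whenever 2 ≤ J ≤ p. -/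

import Mathlib

open scoped BigOperators ENNReal
open MeasureTheory

/-- The functions `h_J` of `1+J` real variables (extra variables beyond the first `J`
are ignored), defined recursively by `h_0(η) = 1` and
`h_J(η;φ_1,…,φ_J) = (η - φ_1 - ⋯ - φ_J)⁻¹ Σ_{j=0}^{J-1} h_j(η;φ_1,…,φ_j) h_{J-j-1}(η;φ_{j+1},…,φ_{J-1})`. -/
noncomputable def hFun : ℕ → ℝ → (ℕ → ℝ) → ℝ
  | 0, _, _ => 1
  | (J+1), η, φ =>
      (η - ∑ i ∈ Finset.range (J+1), φ i)⁻¹ *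
        ∑ j ∈ (Finset.range (J+1)).attach,
          hFun j.1 η φ * hFun (J - j.1) η (fun i => φ (i + j.1))
  termination_by J _ _ => J
  decreasing_by
  · exact Nat.lt_of_lt_of_le (Finset.mem_range.mp j.2) (Nat.le_refl _)
  · exact Nat.lt_succ_of_le (Nat.sub_le J j.1)

/-- Pad a tuple `m : Fin J → ℕ` of indices into a function `ℕ → ℝ` listing `φ_{m_1},…,φ_{m_J}`. -/
noncomputable def padFin (J : ℕ) (φ : ℕ → ℝ) (m : Fin J → ℕ) : ℕ → ℝ :=
  fun n => if h : n < J then φ (m ⟨n, h⟩) else 0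

/-- ω_a coefficients: ω_0 = -1, ω_{±1} = 1/2, otherwise 0. -/
noncomputable def omegaCoef : ℤ → ℝ := fun a =>
  if a = 0 then -1 else if a = 1 ∨ a = -1 then (1 : ℝ) / 2 else 0

/-- The functions `f_{J,K}` of `1+J` real variables (extra variables beyond the first `J`
are ignored); `f_{J,K} = 0` unless `1 ≤ J` and `0 ≤ K ≤ J`. For `J ≥ 2`,
`f_{J,K}(η;φ) = η⁻¹ Σ_{a=-1}^{1} ω_a (1/J!) Σ_{σ ∈ S_J} g_{J-1,K+a}(η;φ_{σ(1)},…,φ_{σ(J-1)})`,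
where `g_{J,K}(η;φ) = -2K (Kη - φ_1 - ⋯ - φ_J)⁻¹ f_{J,K}(η;φ)` is inlined. -/
noncomputable def fAux : ℕ → ℤ → ℝ → (ℕ → ℝ) → ℝ
  | 0, _, _, _ => 0
  | 1, K, η, _ => if K = 0 then -η⁻¹ else if K = 1 then η⁻¹ else 0
  | (J+2), K, η, φ =>
      if 0 ≤ K ∧ K ≤ (J : ℤ) + 2 then
        η⁻¹ * ∑ a ∈ ({-1, 0, 1} : Finset ℤ), omegaCoef a *
          ((Nat.factorial (J+2) : ℝ)⁻¹ *
            ∑ σ : Equiv.Perm (Fin (J+2)),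
              (fun ψ : ℕ → ℝ =>
                (-2 * ((K + a : ℤ) : ℝ)) /
                    (((K + a : ℤ) : ℝ) * η - ∑ i ∈ Finset.range (J+1), ψ i) *
                  fAux (J+1) (K+a) η ψ)
              (fun i => if h : i < J+2 then φ (σ ⟨i, h⟩) else φ i))
      else 0

/-- The functions `g_{J,K} = -2K (Kη - φ_1 - ⋯ - φ_J)⁻¹ f_{J,K}`. -/
noncomputable def gAux (J : ℕ) (K : ℤ) (η : ℝ) (φ : ℕ → ℝ) : ℝ :=
  (-2 * (K : ℝ)) / ((K : ℝ) * η - ∑ i ∈ Finset.range J, φ i) * fAux J K η φ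

/-- Symmetric product `p ⊙ q` of a function of `1+I` variables and one of `1+J` variables. -/
noncomputable def symProd (I J : ℕ) (p q : ℝ → (ℕ → ℝ) → ℝ) (η : ℝ) (φ : ℕ → ℝ) : ℝ :=
  (Nat.factorial (I + J) : ℝ)⁻¹ *
    ∑ σ : Equiv.Perm (Fin (I + J)),
      p η (fun i => if h : i < I + J then φ (σ ⟨i, h⟩) else φ i) *
      q η (fun i => if h : i + I < I + J then φ (σ ⟨i + I, h⟩) else φ (i + I))

/-- `𝒢_{J,0} = Σ_{j=1}^{J-1} Σ_{k=1}^{min(j,J-j)} (1/(4k)) g_{j,k} ⊙ ğ_{J-j,k}`, where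
`ğ_{J,K}(η;φ_1,…,φ_J) = g_{J,K}(η;-φ_1,…,-φ_J)`. -/
noncomputable def GFun (J : ℕ) (η : ℝ) (φ : ℕ → ℝ) : ℝ :=
  ∑ j ∈ Finset.Icc 1 (J - 1), ∑ k ∈ Finset.Icc 1 (min j (J - j)),
    (1 / (4 * (k : ℝ))) *
      symProd j (J - j) (fun η' ψ => gAux j (k : ℤ) η' ψ)
        (fun η' ψ => gAux (J - j) (k : ℤ) η' (fun i => -ψ i)) η φ

/-- The sequence starting with the entries of `y` and continued by zeros. -/
def extendZero {J : ℕ} (y : Fin J → ℝ) : ℕ → ℝ :=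
  fun n => if h : n < J then y ⟨n, h⟩ else 0

lemma extendZero_apply {J : ℕ} (y : Fin J → ℝ) (i : Fin J) : extendZero y i = y i := by
  simp [extendZero]

lemma sum_range_extendZero {J : ℕ} (y : Fin J → ℝ) :
    ∑ i ∈ Finset.range J, extendZero y i = ∑ i, y i := by
  rw [Finset.sum_range]
  exact Finset.sum_congr rfl fun i _ => extendZero_apply y i

lemma extendZero_permute {J : ℕ} (y : Fin J → ℝ) (σ : Equiv.Perm (Fin J)) :
    (fun i => if h : i < J then extendZero y (σ ⟨i, h⟩) else extendZero y i) =
      extendZero (y ∘ σ) := by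
  funext i
  by_cases h : i < J
  · simp [extendZero, h]
  · simp [extendZero, h]

lemma extendZero_append_shift {I J : ℕ} (a : Fin I → ℝ) (b : Fin J → ℝ) :
    (fun i => extendZero (Fin.append a b) (i + I)) = extendZero b := by
  funext i
  by_cases h : i < J
  · have h' : i + I < I + J := by omega
    have e : (⟨i + I, h'⟩ : Fin (I + J)) = Fin.natAdd I ⟨i, h⟩ := by
      ext; simp [add_comm]
    simp only [extendZero, h, h', dif_pos, e, Fin.append_right]
  · have h' : ¬ i + I < I + J := by omega
    simp [extendZero, h, h']

/-- `F ψ` only depends on `ψ 0, …, ψ (J - 1)`. -/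
def DependsOnFirst (J : ℕ) (F : (ℕ → ℝ) → ℝ) : Prop :=
  ∀ ψ ψ' : ℕ → ℝ, (∀ i < J, ψ i = ψ' i) → F ψ = F ψ'

lemma DependsOnFirst.extendZero_append {I J : ℕ} {F : (ℕ → ℝ) → ℝ} (hF : DependsOnFirst I F)
    (a : Fin I → ℝ) (b : Fin J → ℝ) :
    F (extendZero (Fin.append a b)) = F (extendZero a) := by
  refine hF _ _ fun i hi => ?_
  have h' : i < I + J := by omega
  have e : (⟨i, h'⟩ : Fin (I + J)) = Fin.castAdd J ⟨i, hi⟩ := rfl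
  simp only [extendZero, hi, h', dif_pos, e, Fin.append_left]

/-- The concatenation product: `F` is applied to the first `I` variables and `G` to the rest. -/
def concatMul (I : ℕ) (F G : (ℕ → ℝ) → ℝ) : (ℕ → ℝ) → ℝ :=
  fun ψ => F ψ * G (fun i => ψ (i + I))

lemma DependsOnFirst.concatMul {I J : ℕ} {F G : (ℕ → ℝ) → ℝ} (hF : DependsOnFirst I F)
    (hG : DependsOnFirst J G) : DependsOnFirst (I + J) (concatMul I F G) := by
  intro ψ ψ' h
  rw [_root_.concatMul, _root_.concatMul, hF ψ ψ' fun i hi => h i (by omega),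
    hG _ (fun i => ψ' (i + I)) fun i hi => h _ (by omega)]

lemma DependsOnFirst.linear_mul {J : ℕ} {F : (ℕ → ℝ) → ℝ} (hF : DependsOnFirst J F) (a : ℝ) :
    DependsOnFirst J fun ψ => (a - ∑ i ∈ Finset.range J, ψ i) * F ψ := by
  intro ψ ψ' h
  simp only
  rw [hF ψ ψ' h, Finset.sum_congr rfl fun i hi => h i (Finset.mem_range.mp hi)]

/-- The image in the commutative polynomial ring of the formal sum
`∑_m F(x_{m_1}, …, x_{m_J}) X_{m_1} ⋯ X_{m_J}` over all words `m` of length `J`. -/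
noncomputable def wordSum {N : ℕ} (x : Fin N → ℝ) (J : ℕ) :
    ((ℕ → ℝ) → ℝ) →ₗ[ℝ] MvPolynomial (Fin N) ℝ :=
  ∑ m : Fin J → Fin N,
    (LinearMap.toSpanSingleton ℝ _ (∏ i, MvPolynomial.X (m i))) ∘ₗ
      LinearMap.proj (extendZero (x ∘ m))

section WordSum

variable {N : ℕ} (x : Fin N → ℝ)

lemma wordSum_apply (J : ℕ) (F : (ℕ → ℝ) → ℝ) :
    wordSum x J F =
      ∑ m : Fin J → Fin N, F (extendZero (x ∘ m)) • ∏ i, MvPolynomial.X (m i) := by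
  simp [wordSum]

lemma wordSum_congr {J : ℕ} {F G : (ℕ → ℝ) → ℝ}
    (h : ∀ m : Fin J → Fin N, F (extendZero (x ∘ m)) = G (extendZero (x ∘ m))) :
    wordSum x J F = wordSum x J G := by
  simp only [wordSum_apply, h]

lemma wordSum_concatMul {I J : ℕ} {F : (ℕ → ℝ) → ℝ} (hF : DependsOnFirst I F)
    (G : (ℕ → ℝ) → ℝ) :
    wordSum x (I + J) (concatMul I F G) = wordSum x I F * wordSum x J G := by
  simp only [wordSum_apply]
  rw [← (Fin.appendEquiv I J).sum_comp, Fintype.sum_prod_type, Finset.sum_mul_sum]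
  refine Finset.sum_congr rfl fun a _ => Finset.sum_congr rfl fun b _ => ?_
  have e : x ∘ (Fin.appendEquiv I J (a, b)) = Fin.append (x ∘ a) (x ∘ b) := by
    funext i
    refine Fin.addCases (fun i => ?_) (fun i => ?_) i <;> simp [Fin.appendEquiv]
  rw [e, concatMul, hF.extendZero_append, extendZero_append_shift, Fin.prod_univ_add]
  simp only [Fin.appendEquiv, Equiv.coe_fn_mk, Fin.append_left, Fin.append_right,
    smul_mul_smul_comm]

lemma wordSum_comp_perm {J : ℕ} (F : (ℕ → ℝ) → ℝ) (σ : Equiv.Perm (Fin J)) :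
    wordSum x J (fun ψ => F (fun i => if h : i < J then ψ (σ ⟨i, h⟩) else ψ i)) =
      wordSum x J F := by
  simp only [wordSum_apply, extendZero_permute]
  rw [← (Equiv.arrowCongr σ (Equiv.refl (Fin N))).sum_comp]
  refine Finset.sum_congr rfl fun m _ => ?_
  have e : (x ∘ (Equiv.arrowCongr σ (Equiv.refl (Fin N))) m) ∘ σ = x ∘ m := by
    funext i; simp [Equiv.arrowCongr]
  rw [e]
  congr 1
  rw [← Equiv.prod_comp σ]
  simp [Equiv.arrowCongr]

lemma prod_X_eq_monomial {J : ℕ} (m : Fin J → Fin N) :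
    ∏ i, (MvPolynomial.X (m i) : MvPolynomial (Fin N) ℝ) =
      MvPolynomial.monomial (∑ i, Finsupp.single (m i) 1) 1 := by
  simp only [MvPolynomial.X]
  rw [MvPolynomial.monomial_sum_one]

lemma coeff_wordSum {J : ℕ} (F : (ℕ → ℝ) → ℝ) (n : Fin N →₀ ℕ) :
    (wordSum x J F).coeff n =
      ∑ m : Fin J → Fin N with ∑ i, Finsupp.single (m i) 1 = n, F (extendZero (x ∘ m)) := by
  classical
  rw [wordSum_apply, MvPolynomial.coeff_sum, Finset.sum_filter]
  refine Finset.sum_congr rfl fun m _ => ?_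
  rw [prod_X_eq_monomial, MvPolynomial.coeff_smul, MvPolynomial.coeff_monomial]
  split_ifs <;> simp

lemma sum_range_extendZero_comp {J : ℕ} (m : Fin J → Fin N) :
    ∑ i ∈ Finset.range J, extendZero (x ∘ m) i =
      (∑ i, Finsupp.single (m i) 1 : Fin N →₀ ℕ).sum fun k a => (a : ℝ) * x k := by
  rw [sum_range_extendZero, ← Finsupp.sum_finsetSum_index (by simp) (by intros; push_cast; ring)]
  simp

/-- Multiplication by `a - Φ` is injective on word sums, in the absence of resonances. -/
lemma wordSum_injective_of_linear_mul {J : ℕ} (a : ℝ)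
    (ha : ∀ m : Fin J → Fin N, a - ∑ i ∈ Finset.range J, extendZero (x ∘ m) i ≠ 0)
    {F G : (ℕ → ℝ) → ℝ}
    (h : wordSum x J (fun ψ => (a - ∑ i ∈ Finset.range J, ψ i) * F ψ) =
      wordSum x J (fun ψ => (a - ∑ i ∈ Finset.range J, ψ i) * G ψ)) :
    wordSum x J F = wordSum x J G := by
  ext n
  have key : ∀ F : (ℕ → ℝ) → ℝ,
      (wordSum x J (fun ψ => (a - ∑ i ∈ Finset.range J, ψ i) * F ψ)).coeff n =
        (a - n.sum fun k b => (b : ℝ) * x k) * (wordSum x J F).coeff n := by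
    intro F
    rw [coeff_wordSum, coeff_wordSum, Finset.mul_sum]
    refine Finset.sum_congr rfl fun m hm => ?_
    rw [sum_range_extendZero_comp, (Finset.mem_filter.mp hm).2]
  by_cases hn : ∃ m : Fin J → Fin N, ∑ i, Finsupp.single (m i) 1 = n
  · obtain ⟨m, hm⟩ := hn
    have h1 := ha m
    rw [sum_range_extendZero_comp, hm] at h1
    have h2 := congrArg (MvPolynomial.coeff n) h
    rw [key, key] at h2
    exact mul_left_cancel₀ h1 h2
  · push Not at hn
    rw [coeff_wordSum, coeff_wordSum, Finset.filter_false_of_mem fun m _ => hn m]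
    simp

/-- The coefficient of a word sum at `X_1 ⋯ X_N` is the sum over all permutations. -/
lemma coeff_one_wordSum (F : (ℕ → ℝ) → ℝ) :
    (wordSum x N F).coeff (∑ i, Finsupp.single i 1) =
      ∑ σ : Equiv.Perm (Fin N), F (extendZero (x ∘ σ)) := by
  classical
  rw [coeff_wordSum]
  symm
  refine Finset.sum_bij (fun σ _ => σ) ?_ ?_ ?_ ?_
  · intro σ _
    simp only [Finset.mem_filter, Finset.mem_univ, true_and]
    exact Equiv.sum_comp σ fun i => (Finsupp.single i 1 : Fin N →₀ ℕ)
  · intro σ _ τ _ h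
    exact DFunLike.coe_injective h
  · intro m hm
    have hm' := (Finset.mem_filter.mp hm).2
    have hs : Function.Surjective m := by
      intro k
      by_contra! hk
      have := DFunLike.congr_fun hm' k
      simp [Finsupp.finsetSum_apply, Finsupp.single_apply, hk] at this
    exact ⟨Equiv.ofBijective m (Finite.surjective_iff_bijective.mp hs), Finset.mem_univ _, rfl⟩
  · intro σ _
    rfl

end WordSum

lemma sum_range_add_shift (I J : ℕ) (ψ : ℕ → ℝ) :
    ∑ i ∈ Finset.range (I + J), ψ i =
      ∑ i ∈ Finset.range I, ψ i + ∑ i ∈ Finset.range J, ψ (i + I) := by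
  rw [Finset.sum_range_add]
  simp only [add_comm]

lemma hFun_zero (η : ℝ) (ψ : ℕ → ℝ) : hFun 0 η ψ = 1 := by
  rw [hFun]

lemma hFun_succ (J : ℕ) (η : ℝ) (ψ : ℕ → ℝ) :
    hFun (J + 1) η ψ = (η - ∑ i ∈ Finset.range (J + 1), ψ i)⁻¹ *
      ∑ ij ∈ Finset.HasAntidiagonal.antidiagonal J, concatMul ij.1 (hFun ij.1 η) (hFun ij.2 η) ψ := by
  rw [hFun, Finset.Nat.sum_antidiagonal_eq_sum_range_succ_mk,
    Finset.sum_attach (Finset.range (J + 1))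
      (fun j => hFun j η ψ * hFun (J - j) η (fun i => ψ (i + j)))]
  rfl

lemma dependsOnFirst_hFun (η : ℝ) (J : ℕ) : DependsOnFirst J (hFun J η) := by
  induction J using Nat.strong_induction_on with
  | _ J ih =>
    cases J with
    | zero => intro ψ ψ' _; rw [hFun_zero, hFun_zero]
    | succ J =>
      intro ψ ψ' h
      rw [hFun_succ, hFun_succ, Finset.sum_congr rfl fun i hi => h i (Finset.mem_range.mp hi)]
      congr 1
      refine Finset.sum_congr rfl fun ij hij => ?_
      rw [Finset.HasAntidiagonal.mem_antidiagonal] at hij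
      exact (ih ij.1 (by omega)).concatMul (ih ij.2 (by omega)) _ _ fun i hi => h i (by omega)

/-- `h_J` for `J ≥ 1`, and `0` for `J = 0`. -/
noncomputable def hPos (η : ℝ) (J : ℕ) (ψ : ℕ → ℝ) : ℝ := if J = 0 then 0 else hFun J η ψ

lemma dependsOnFirst_hPos (η : ℝ) (J : ℕ) : DependsOnFirst J (hPos η J) := by
  intro ψ ψ' h
  rw [hPos, hPos, dependsOnFirst_hFun η J ψ ψ' h]

/-- The part with `J` variables of the `K`-th concatenation power of `h_1 + h_2 + ⋯`. -/
noncomputable def hPow (η : ℝ) : ℕ → ℕ → (ℕ → ℝ) → ℝ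
  | 0, J => fun _ => if J = 0 then 1 else 0
  | K + 1, J => ∑ ij ∈ Finset.HasAntidiagonal.antidiagonal J,
      concatMul ij.1 (hPos η ij.1) (hPow η K ij.2)

lemma dependsOnFirst_hPow (η : ℝ) (K J : ℕ) : DependsOnFirst J (hPow η K J) := by
  induction K generalizing J with
  | zero => intro ψ ψ' _; rfl
  | succ K ih =>
    intro ψ ψ' h
    rw [hPow, Finset.sum_apply, Finset.sum_apply]
    refine Finset.sum_congr rfl fun ij hij => ?_
    rw [Finset.HasAntidiagonal.mem_antidiagonal] at hij
    exact (dependsOnFirst_hPos η ij.1).concatMul (ih ij.2) _ _ fun i hi => h i (by omega)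

section Riccati

open PowerSeries

variable {N : ℕ} (x : Fin N → ℝ) (η : ℝ)

/-- The generating series `∑_{J ≥ 1} h_J t^J` with coefficients in the polynomial ring. -/
noncomputable def hSeries : PowerSeries (MvPolynomial (Fin N) ℝ) :=
  mk fun J => wordSum x J (hPos η J)

/-- The generating series of `(Kη - Φ)` times the `K`-th power of `h_1 + h_2 + ⋯`. -/
noncomputable def derivSeries (K : ℕ) : PowerSeries (MvPolynomial (Fin N) ℝ) :=
  mk fun J => wordSum x J fun ψ =>
    ((K : ℝ) * η - ∑ i ∈ Finset.range J, ψ i) * hPow η K J ψ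

lemma wordSum_zero_one : wordSum x 0 (fun _ => 1) = 1 := by
  simp [wordSum_apply]

lemma hSeries_pow (K : ℕ) : hSeries x η ^ K = mk fun J => wordSum x J (hPow η K J) := by
  induction K with
  | zero =>
    ext1 J
    rw [pow_zero, coeff_one, coeff_mk]
    by_cases hJ : J = 0
    · subst hJ
      simpa [hPow] using (wordSum_zero_one x).symm
    · simp only [hJ, if_false, hPow]
      exact ((wordSum x J).map_zero).symm
  | succ K ih =>
    ext1 J
    rw [pow_succ', ih, coeff_mul, coeff_mk, hPow, map_sum]
    refine Finset.sum_congr rfl fun ij hij => ?_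
    rw [Finset.HasAntidiagonal.mem_antidiagonal] at hij
    subst hij
    rw [wordSum_concatMul x (dependsOnFirst_hPos η ij.1), hSeries, coeff_mk, coeff_mk]

lemma hPow_one (J : ℕ) : hPow η 1 J = hPos η J := by
  funext ψ
  rw [hPow, Finset.sum_apply, Finset.sum_eq_single (J, 0)]
  · simp [concatMul, hPow]
  · rintro ⟨i, j⟩ hij hne
    rw [Finset.HasAntidiagonal.mem_antidiagonal] at hij
    have : j ≠ 0 := by rintro rfl; exact hne (by simpa using hij)
    simp [concatMul, hPow, this]
  · simp

lemma derivSeries_succ (K : ℕ) :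
    derivSeries x η (K + 1) =
      derivSeries x η 1 * hSeries x η ^ K + hSeries x η * derivSeries x η K := by
  ext1 J
  rw [hSeries_pow, map_add, coeff_mul, coeff_mul, ← Finset.sum_add_distrib]
  have e : (fun ψ => (((K + 1 : ℕ) : ℝ) * η - ∑ i ∈ Finset.range J, ψ i) * hPow η (K + 1) J ψ) =
      ∑ ij ∈ Finset.HasAntidiagonal.antidiagonal J,
        (concatMul ij.1 (fun ψ => (((1 : ℕ) : ℝ) * η - ∑ i ∈ Finset.range ij.1, ψ i) *
            hPow η 1 ij.1 ψ) (hPow η K ij.2) +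
          concatMul ij.1 (hPos η ij.1) (fun ψ => ((K : ℝ) * η - ∑ i ∈ Finset.range ij.2, ψ i) *
            hPow η K ij.2 ψ)) := by
    funext ψ
    rw [hPow, Finset.sum_apply, Finset.sum_apply, Finset.mul_sum]
    refine Finset.sum_congr rfl fun ij hij => ?_
    rw [Finset.HasAntidiagonal.mem_antidiagonal] at hij
    subst hij
    rw [sum_range_add_shift, Pi.add_apply, hPow_one]
    simp only [concatMul]
    push_cast
    ring
  rw [derivSeries, coeff_mk, e, map_sum]
  refine Finset.sum_congr rfl fun ij hij => ?_
  rw [Finset.HasAntidiagonal.mem_antidiagonal] at hij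
  subst hij
  rw [map_add, wordSum_concatMul x ((dependsOnFirst_hPow η 1 ij.1).linear_mul _),
    wordSum_concatMul x (dependsOnFirst_hPos η ij.1)]
  simp only [derivSeries, hSeries, coeff_mk]

lemma derivSeries_eq (K : ℕ) :
    derivSeries x η (K + 1) = (K + 1 : ℕ) * (hSeries x η ^ K * derivSeries x η 1) := by
  induction K with
  | zero => simp
  | succ K ih =>
    rw [derivSeries_succ, ih]
    push_cast
    ring

/-- The sum of all variables. -/
noncomputable def linearForm (N : ℕ) : MvPolynomial (Fin N) ℝ := ∑ k, MvPolynomial.X k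

lemma wordSum_one_one : wordSum x 1 (fun _ => 1) = linearForm N := by
  rw [wordSum_apply, linearForm, ← (Equiv.funUnique (Fin 1) (Fin N)).sum_comp]
  simp

lemma wordSum_succ {J : ℕ} {F : (ℕ → ℝ) → ℝ} (hF : DependsOnFirst J F) :
    wordSum x (J + 1) F = wordSum x J F * linearForm N := by
  rw [← wordSum_one_one x, ← wordSum_concatMul x hF]
  congr 1
  funext ψ
  simp [concatMul]

lemma one_add_hSeries : 1 + hSeries x η = mk fun J => wordSum x J (hFun J η) := by
  ext1 J
  rw [map_add, coeff_one, hSeries, coeff_mk, coeff_mk]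
  by_cases hJ : J = 0
  · subst hJ
    have h1 : hFun 0 η = fun _ => 1 := funext (hFun_zero η)
    have h2 : hPos η 0 = 0 := by funext ψ; simp [hPos]
    rw [h1, h2, map_zero, wordSum_zero_one]; simp
  · have h2 : hPos η J = hFun J η := by funext ψ; simp [hPos, hJ]
    simp [h2, hJ]

/-- The Riccati equation satisfied by the generating series of the `h_J`. -/
lemma coeff_derivSeries_one {J : ℕ}
    (hx : ∀ m : Fin (J + 1) → Fin N,
      η - ∑ i ∈ Finset.range (J + 1), extendZero (x ∘ m) i ≠ 0) :
    coeff (J + 1) (derivSeries x η 1) =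
      coeff J ((1 + hSeries x η) ^ 2) * linearForm N := by
  rw [derivSeries, coeff_mk, hPow_one, sq, one_add_hSeries, coeff_mul]
  have e : wordSum x (J + 1)
      (fun ψ => (((1 : ℕ) : ℝ) * η - ∑ i ∈ Finset.range (J + 1), ψ i) * hPos η (J + 1) ψ) =
      wordSum x (J + 1)
        (∑ ij ∈ Finset.HasAntidiagonal.antidiagonal J,
          concatMul ij.1 (hFun ij.1 η) (hFun ij.2 η)) := by
    refine wordSum_congr x fun m => ?_
    rw [hPos, if_neg (Nat.succ_ne_zero J), hFun_succ, Nat.cast_one, one_mul,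
      mul_inv_cancel_left₀ (hx m), Finset.sum_apply]
  rw [e, map_sum, Finset.sum_mul]
  refine Finset.sum_congr rfl fun ij hij => ?_
  rw [Finset.HasAntidiagonal.mem_antidiagonal] at hij
  subst hij
  rw [wordSum_succ x ((dependsOnFirst_hFun η ij.1).concatMul (dependsOnFirst_hFun η ij.2)),
    wordSum_concatMul x (dependsOnFirst_hFun η ij.1), coeff_mk, coeff_mk]

lemma coeff_derivSeries_one_zero : coeff 0 (derivSeries x η 1) = 0 := by
  rw [derivSeries, coeff_mk, hPow_one]
  refine Eq.trans (wordSum_congr x (G := 0) fun m => ?_) (map_zero _)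
  simp [hPos]

/-- No sum of `J ≤ L` of the numbers `x_k` equals `K η`, for `1 ≤ K ≤ J`. -/
def NonResonant (L : ℕ) : Prop :=
  ∀ J K : ℕ, 1 ≤ K → K ≤ J → J ≤ L → ∀ m : Fin J → Fin N,
    (K : ℝ) * η - ∑ i ∈ Finset.range J, extendZero (x ∘ m) i ≠ 0

variable {x η}

lemma NonResonant.coeff_derivSeries {L : ℕ} (hx : NonResonant x η L) (K : ℕ) {J : ℕ}
    (hJ : J + 1 ≤ L) :
    coeff (J + 1) (derivSeries x η (K + 1)) = (K + 1 : ℕ) *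
      (coeff J (hSeries x η ^ K) + 2 * coeff J (hSeries x η ^ (K + 1)) +
        coeff J (hSeries x η ^ (K + 2))) * linearForm N := by
  have e : hSeries x η ^ K + 2 * hSeries x η ^ (K + 1) + hSeries x η ^ (K + 2) =
      hSeries x η ^ K * (1 + hSeries x η) ^ 2 := by ring
  have e2 : coeff J (hSeries x η ^ K) + 2 * coeff J (hSeries x η ^ (K + 1)) +
        coeff J (hSeries x η ^ (K + 2)) = coeff J (hSeries x η ^ K * (1 + hSeries x η) ^ 2) := by
    rw [← e, map_add, map_add, two_mul, two_mul, map_add]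
  rw [e2, derivSeries_eq, ← map_natCast (C (R := MvPolynomial (Fin N) ℝ)), coeff_C_mul, mul_assoc]
  congr 1
  rw [coeff_mul, coeff_mul, Finset.Nat.sum_antidiagonal_succ', coeff_derivSeries_one_zero,
    mul_zero, zero_add, Finset.sum_mul]
  refine Finset.sum_congr rfl fun ij hij => ?_
  rw [Finset.HasAntidiagonal.mem_antidiagonal] at hij
  rw [coeff_derivSeries_one x η fun m => ?_, mul_assoc]
  simpa using hx (ij.2 + 1) 1 le_rfl (by omega) (by omega) m

end Riccati

lemma fAux_add_two (J : ℕ) {K : ℤ} (hK : 0 ≤ K ∧ K ≤ (J : ℤ) + 2) (η : ℝ) (ψ : ℕ → ℝ) :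
    fAux (J + 2) K η ψ = η⁻¹ * ∑ a ∈ ({-1, 0, 1} : Finset ℤ), omegaCoef a *
      ((Nat.factorial (J + 2) : ℝ)⁻¹ * ∑ σ : Equiv.Perm (Fin (J + 2)),
        gAux (J + 1) (K + a) η (fun i => if h : i < J + 2 then ψ (σ ⟨i, h⟩) else ψ i)) := by
  rw [fAux, if_pos hK]
  rfl

lemma fAux_eq_zero_of_lt {J : ℕ} {K : ℤ} (hK : (J : ℤ) < K) (η : ℝ) (ψ : ℕ → ℝ) :
    fAux J K η ψ = 0 := by
  match J with
  | 0 => rw [fAux]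
  | 1 =>
    rw [fAux, if_neg, if_neg] <;> push_cast at hK <;> omega
  | J + 2 =>
    rw [fAux, if_neg]
    push_cast at hK
    omega

lemma gAux_eq_zero_of_lt {J : ℕ} {K : ℤ} (hK : (J : ℤ) < K) (η : ℝ) : gAux J K η = 0 := by
  funext ψ
  rw [gAux, fAux_eq_zero_of_lt hK, mul_zero, Pi.zero_apply]

lemma gAux_zero_right (J : ℕ) (η : ℝ) : gAux J 0 η = 0 := by
  funext ψ
  simp [gAux]

lemma DependsOnFirst.gAux {J : ℕ} {K : ℤ} {η : ℝ} (h : DependsOnFirst J (fAux J K η)) :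
    DependsOnFirst J (gAux J K η) := by
  intro ψ ψ' e
  rw [_root_.gAux, _root_.gAux, h ψ ψ' e,
    Finset.sum_congr rfl fun i hi => e i (Finset.mem_range.mp hi)]

lemma dependsOnFirst_fAux (J : ℕ) (K : ℤ) (η : ℝ) : DependsOnFirst J (fAux J K η) := by
  induction J using Nat.strong_induction_on generalizing K with
  | _ J ih =>
    intro ψ ψ' h
    match J with
    | 0 => rw [fAux, fAux]
    | 1 => rw [fAux, fAux]
    | J + 2 =>
      by_cases hK : 0 ≤ K ∧ K ≤ (J : ℤ) + 2
      · rw [fAux_add_two J hK, fAux_add_two J hK]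
        congr 1
        refine Finset.sum_congr rfl fun a _ => ?_
        congr 2
        refine Finset.sum_congr rfl fun σ _ =>
          (ih (J + 1) (by omega) (K + a)).gAux _ _ fun i hi => ?_
        have hi' : i < J + 2 := by omega
        simp only [hi', dif_pos]
        exact h _ (σ ⟨i, hi'⟩).2
      · rw [fAux, fAux, if_neg hK, if_neg hK]

lemma dependsOnFirst_gAux (J : ℕ) (K : ℤ) (η : ℝ) : DependsOnFirst J (gAux J K η) :=
  (dependsOnFirst_fAux J K η).gAux

lemma fAux_extendZero_comp_perm {J : ℕ} (K : ℤ) (η : ℝ) (y : Fin J → ℝ)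
    (τ : Equiv.Perm (Fin J)) :
    fAux J K η (extendZero (y ∘ τ)) = fAux J K η (extendZero y) := by
  match J with
  | 0 => rw [fAux, fAux]
  | 1 => rw [fAux, fAux]
  | J + 2 =>
    by_cases hK : 0 ≤ K ∧ K ≤ (J : ℤ) + 2
    · rw [fAux_add_two J hK, fAux_add_two J hK]
      congr 1
      refine Finset.sum_congr rfl fun a _ => ?_
      congr 2
      simp only [extendZero_permute]
      exact Equiv.sum_comp (Equiv.mulLeft τ)
        fun σ => gAux (J + 1) (K + a) η (extendZero (y ∘ σ))
    · rw [fAux, fAux, if_neg hK, if_neg hK]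

lemma gAux_extendZero_comp_perm {J : ℕ} (K : ℤ) (η : ℝ) (y : Fin J → ℝ)
    (τ : Equiv.Perm (Fin J)) :
    gAux J K η (extendZero (y ∘ τ)) = gAux J K η (extendZero y) := by
  rw [gAux, gAux, fAux_extendZero_comp_perm, sum_range_extendZero, sum_range_extendZero]
  congr 3
  exact Equiv.sum_comp τ y

section Riccati

open PowerSeries

variable {N : ℕ} {x : Fin N → ℝ} {η : ℝ}

lemma wordSum_fAux (x : Fin N → ℝ) (η : ℝ) (J : ℕ) {K : ℤ} (hK : 0 ≤ K ∧ K ≤ (J : ℤ) + 2) :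
    wordSum x (J + 2) (fAux (J + 2) K η) =
      η⁻¹ • ∑ a ∈ ({-1, 0, 1} : Finset ℤ),
        omegaCoef a • wordSum x (J + 2) (gAux (J + 1) (K + a) η) := by
  have e : fAux (J + 2) K η = η⁻¹ • ∑ a ∈ ({-1, 0, 1} : Finset ℤ), omegaCoef a •
      ((Nat.factorial (J + 2) : ℝ)⁻¹ • ∑ σ : Equiv.Perm (Fin (J + 2)), fun ψ =>
        gAux (J + 1) (K + a) η (fun i => if h : i < J + 2 then ψ (σ ⟨i, h⟩) else ψ i)) := by
    funext ψ
    rw [fAux_add_two J hK]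
    simp [Finset.sum_apply]
  have hfac : (Nat.factorial (J + 2) : ℝ) ≠ 0 := by positivity
  rw [e]
  simp only [map_smul, map_sum, wordSum_comp_perm]
  simp only [Finset.sum_const, Finset.card_univ, Fintype.card_perm, Fintype.card_fin,
    ← Nat.cast_smul_eq_nsmul ℝ, inv_smul_smul₀ hfac]

lemma wordSum_linear_mul_gAux {L : ℕ} (hx : NonResonant x η L) {J K : ℕ} (hK : 1 ≤ K)
    (hKJ : K ≤ J) (hJ : J ≤ L) :
    wordSum x J (fun ψ => ((K : ℝ) * η - ∑ i ∈ Finset.range J, ψ i) * gAux J K η ψ) =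
      (-2 * (K : ℝ)) • wordSum x J (fAux J K η) := by
  rw [← map_smul]
  refine wordSum_congr x fun m => ?_
  have h := hx J K hK hKJ hJ m
  rw [gAux, Int.cast_natCast, Pi.smul_apply, smul_eq_mul]
  field_simp

lemma coeff_hSeries_pow_of_lt {J K : ℕ} (h : J < K) : coeff J (hSeries x η ^ K) = 0 := by
  have h1 : X ∣ hSeries x η := by
    rw [X_dvd_iff, ← coeff_zero_eq_constantCoeff_apply, hSeries, coeff_mk]
    refine Eq.trans (wordSum_congr x (G := 0) fun m => ?_) (map_zero _)
    simp [hPos]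
  exact X_pow_dvd_iff.mp (pow_dvd_pow_of_dvd h1 K) J h

/-- The symmetrization of `g_{J,K}` is a multiple of that of the `K`-th power of
`h_1 + h_2 + ⋯`. -/
lemma NonResonant.wordSum_gAux {L : ℕ} (hx : NonResonant x η L) {J : ℕ} (hJ1 : 1 ≤ J)
    (hJ : J ≤ L) (K : ℕ) :
    wordSum x J (gAux J K η) = (2 * (-1) ^ K * η⁻¹ ^ J) • wordSum x J (hPow η K J) := by
  have hcoeff : ∀ J K, wordSum x J (hPow η K J) = coeff J (hSeries x η ^ K) := by
    intro J K; rw [hSeries_pow, coeff_mk]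
  induction J, hJ1 using Nat.le_induction generalizing K with
  | base =>
    rcases lt_or_ge 1 K with h1 | h1
    · rw [hcoeff, coeff_hSeries_pow_of_lt h1, gAux_eq_zero_of_lt (by exact_mod_cast h1), map_zero,
        smul_zero]
    interval_cases K
    · rw [Nat.cast_zero, gAux_zero_right, hcoeff, pow_zero (hSeries x η), coeff_one]
      simp
    · rw [hPow_one, ← map_smul]
      refine wordSum_congr x fun m => ?_
      simp [gAux, fAux, hPos, hFun_succ, hFun_zero, concatMul]
      ring
  | succ J hJ1 ih =>
    rcases Nat.eq_zero_or_pos K with rfl | hK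
    · rw [Nat.cast_zero, gAux_zero_right, hcoeff, pow_zero (hSeries x η), coeff_one]
      simp
    rcases lt_or_ge (J + 1) K with h1 | h1
    · rw [hcoeff, coeff_hSeries_pow_of_lt h1, gAux_eq_zero_of_lt (by exact_mod_cast h1), map_zero,
        smul_zero]
    obtain ⟨k, rfl⟩ : ∃ k, K = k + 1 := ⟨K - 1, by omega⟩
    obtain ⟨j, rfl⟩ : ∃ j, J = j + 1 := ⟨J - 1, by omega⟩
    rw [← map_smul]
    refine wordSum_injective_of_linear_mul x (((k + 1 : ℕ) : ℝ) * η)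
      (hx (j + 1 + 1) (k + 1) hK h1 hJ) ?_
    rw [wordSum_linear_mul_gAux hx hK h1 hJ, wordSum_fAux x η j (by push_cast; omega)]
    have hg : ∀ K : ℕ, wordSum x (j + 2) (gAux (j + 1) K η) =
        (2 * (-1) ^ K * η⁻¹ ^ (j + 1)) • (coeff (j + 1) (hSeries x η ^ K) * linearForm N) := by
      intro K
      rw [wordSum_succ x (dependsOnFirst_gAux (j + 1) K η), ih (by omega) K, hcoeff,
        smul_mul_assoc]
    have e0 : ((k + 1 : ℕ) : ℤ) + -1 = (k : ℕ) := by push_cast; ring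
    have e1 : ((k + 1 : ℕ) : ℤ) + 0 = (k + 1 : ℕ) := by push_cast; ring
    have e2 : ((k + 1 : ℕ) : ℤ) + 1 = (k + 2 : ℕ) := by push_cast; ring
    have hr : wordSum x (j + 1 + 1) (fun ψ =>
        (((k + 1 : ℕ) : ℝ) * η - ∑ i ∈ Finset.range (j + 1 + 1), ψ i) *
          ((2 * (-1) ^ (k + 1) * η⁻¹ ^ (j + 1 + 1)) • hPow η (k + 1) (j + 1 + 1)) ψ) =
        (2 * (-1) ^ (k + 1) * η⁻¹ ^ (j + 1 + 1)) •
          coeff (j + 1 + 1) (derivSeries x η (k + 1)) := by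
      rw [derivSeries, coeff_mk, ← map_smul]
      refine wordSum_congr x fun m => ?_
      simp only [Pi.smul_apply, smul_eq_mul]
      ring
    rw [hr, hx.coeff_derivSeries k hJ, Finset.sum_insert (by decide),
      Finset.sum_insert (by decide), Finset.sum_singleton, e0, e1, e2, hg, hg, hg]
    have hω0 : omegaCoef 0 = -1 := by simp [omegaCoef]
    have hω1 : omegaCoef 1 = 1 / 2 := by simp [omegaCoef]
    have hω2 : omegaCoef (-1) = 1 / 2 := by simp [omegaCoef]
    have hexpand : ∀ a b d l : MvPolynomial (Fin N) ℝ, ((k + 1 : ℕ) : MvPolynomial (Fin N) ℝ) *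
        (a + 2 * b + d) * l = ((k + 1 : ℕ) : ℝ) • (a * l + (2 : ℝ) • (b * l) + d * l) := by
      intro a b d l
      rw [Nat.cast_smul_eq_nsmul, nsmul_eq_mul, ofNat_smul_eq_nsmul, nsmul_eq_mul]
      push_cast
      ring
    rw [hexpand, hω0, hω1, hω2]
    module

/-- Formula for `g_{J,K}` as a symmetrization. -/
lemma gAux_eq_sum_hPow {J : ℕ} {y : Fin J → ℝ} (hy : NonResonant y η J) (hJ : 1 ≤ J) (K : ℕ) :
    gAux J K η (extendZero y) = (Nat.factorial J : ℝ)⁻¹ * (2 * (-1) ^ K * η⁻¹ ^ J) *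
      ∑ σ : Equiv.Perm (Fin J), hPow η K J (extendZero (y ∘ σ)) := by
  have h := congrArg (MvPolynomial.coeff (∑ i, Finsupp.single i 1)) (hy.wordSum_gAux hJ le_rfl K)
  rw [MvPolynomial.coeff_smul, coeff_one_wordSum, coeff_one_wordSum] at h
  simp only [gAux_extendZero_comp_perm, Finset.sum_const, Finset.card_univ, Fintype.card_perm,
    Fintype.card_fin, nsmul_eq_mul, smul_eq_mul] at h
  rw [mul_assoc, ← h, inv_mul_cancel_left₀ (by positivity)]

end Riccati

/-- Absolute summability of `c_{m_1} ⋯ c_{m_J} F(φ_{m_1}, …, φ_{m_J})` over all indices. -/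
def WordSummable (c : ℕ → ℂ) (φ : ℕ → ℝ) (J : ℕ) (F : (ℕ → ℝ) → ℝ) : Prop :=
  Summable fun m : Fin J → ℕ => ‖∏ i, c (m i)‖ * |F (padFin J φ m)|

lemma padFin_eq_extendZero (J : ℕ) (φ : ℕ → ℝ) (m : Fin J → ℕ) :
    padFin J φ m = extendZero (φ ∘ m) := rfl

namespace WordSummable

variable {c : ℕ → ℂ} {φ : ℕ → ℝ}

lemma of_abs_le {J : ℕ} {F G : (ℕ → ℝ) → ℝ} (hG : WordSummable c φ J G)
    (h : ∀ m : Fin J → ℕ, |F (padFin J φ m)| ≤ |G (padFin J φ m)|) : WordSummable c φ J F :=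
  Summable.of_nonneg_of_le (fun _ => by positivity)
    (fun m => mul_le_mul_of_nonneg_left (h m) (norm_nonneg _)) hG

lemma congr {J : ℕ} {F G : (ℕ → ℝ) → ℝ} (hG : WordSummable c φ J G)
    (h : ∀ m : Fin J → ℕ, F (padFin J φ m) = G (padFin J φ m)) : WordSummable c φ J F :=
  hG.of_abs_le fun m => (congrArg abs (h m)).le

lemma zero (J : ℕ) : WordSummable c φ J fun _ => 0 := by
  simp [WordSummable]

lemma add {J : ℕ} {F G : (ℕ → ℝ) → ℝ} (hF : WordSummable c φ J F) (hG : WordSummable c φ J G) :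
    WordSummable c φ J fun ψ => F ψ + G ψ := by
  refine Summable.of_nonneg_of_le (fun _ => by positivity) (fun m => ?_) (Summable.add hF hG)
  rw [← mul_add]
  exact mul_le_mul_of_nonneg_left (abs_add_le _ _) (norm_nonneg _)

lemma sum {J : ℕ} {ι : Type*} (s : Finset ι) {F : ι → (ℕ → ℝ) → ℝ}
    (h : ∀ i ∈ s, WordSummable c φ J (F i)) : WordSummable c φ J fun ψ => ∑ i ∈ s, F i ψ := by
  classical
  induction s using Finset.induction_on with
  | empty => simpa using zero J
  | insert a s ha ih =>
    simp only [Finset.sum_insert ha]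
    exact (h a (Finset.mem_insert_self a s)).add
      (ih fun i hi => h i (Finset.mem_insert_of_mem hi))

lemma const_mul {J : ℕ} {F : (ℕ → ℝ) → ℝ} (hF : WordSummable c φ J F) (a : ℝ) :
    WordSummable c φ J fun ψ => a * F ψ := by
  refine (Summable.mul_left |a| hF).congr fun m => ?_
  rw [abs_mul]
  ring

lemma comp_perm {J : ℕ} {F : (ℕ → ℝ) → ℝ} (hF : WordSummable c φ J F)
    (σ : Equiv.Perm (Fin J)) :
    WordSummable c φ J fun ψ => F (fun i => if h : i < J then ψ (σ ⟨i, h⟩) else ψ i) := by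
  refine (((Equiv.arrowCongr σ⁻¹ (Equiv.refl ℕ)).summable_iff).mpr hF).congr fun m => ?_
  have e : (Equiv.arrowCongr σ⁻¹ (Equiv.refl ℕ)) m = m ∘ σ := by
    rfl
  rw [Function.comp_apply, e, padFin_eq_extendZero, padFin_eq_extendZero]
  beta_reduce
  rw [extendZero_permute]
  congr 2
  exact Equiv.prod_comp σ fun i => c (m i)

lemma concatMul {I J : ℕ} {F G : (ℕ → ℝ) → ℝ} (hF : WordSummable c φ I F)
    (hG : WordSummable c φ J G) (hF' : DependsOnFirst I F) :
    WordSummable c φ (I + J) (concatMul I F G) := by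
  refine ((Fin.appendEquiv I J).summable_iff).mp ?_
  refine (Summable.mul_of_nonneg hF hG (fun _ => by positivity) fun _ => by positivity).congr ?_
  rintro ⟨a, b⟩
  have e : φ ∘ (Fin.appendEquiv I J (a, b)) = Fin.append (φ ∘ a) (φ ∘ b) := by
    funext i
    refine Fin.addCases (fun i => ?_) (fun i => ?_) i <;> simp [Fin.appendEquiv]
  rw [Function.comp_apply, padFin_eq_extendZero, padFin_eq_extendZero, padFin_eq_extendZero, e,
    _root_.concatMul, hF'.extendZero_append, extendZero_append_shift, Fin.prod_univ_add,
    norm_mul, abs_mul]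
  simp only [Fin.appendEquiv, Equiv.coe_fn_mk, Fin.append_left, Fin.append_right]
  ring

lemma symProd {I J : ℕ} {p q : ℝ → (ℕ → ℝ) → ℝ} {η : ℝ} (hp : WordSummable c φ I (p η))
    (hq : WordSummable c φ J (q η)) (hp' : DependsOnFirst I (p η)) :
    WordSummable c φ (I + J) (symProd I J p q η) :=
  const_mul (sum _ fun σ _ => (hp.concatMul hq hp').comp_perm σ) _

lemma neg_args {J : ℕ} {F : (ℕ → ℝ) → ℝ} (hF : WordSummable c φ J F) {star : ℕ → ℕ}
    (hs : Function.Involutive star) (hc : ∀ k, c (star k) = starRingEnd ℂ (c k))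
    (hφ : ∀ k, φ (star k) = -φ k) : WordSummable c φ J fun ψ => F (fun i => -ψ i) := by
  refine (((Equiv.arrowCongr (Equiv.refl (Fin J)) hs.toPerm).summable_iff).mpr hF).congr
    fun m => ?_
  have e : (Equiv.arrowCongr (Equiv.refl (Fin J)) hs.toPerm) m = star ∘ m := rfl
  have e2 : (fun i => -padFin J φ m i) = padFin J φ (star ∘ m) := by
    funext i
    by_cases h : i < J <;> simp [padFin, h, hφ]
  rw [Function.comp_apply, e]
  beta_reduce
  rw [e2]
  simp [hc]

lemma hPow {η : ℝ} {L : ℕ}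
    (h : ∀ j : ℕ, 1 ≤ j → j ≤ L → WordSummable c φ j (hFun j η)) (K : ℕ) {J : ℕ} (hJ : J ≤ L) :
    WordSummable c φ J (hPow η K J) := by
  induction K generalizing J with
  | zero =>
    rcases Nat.eq_zero_or_pos J with rfl | hJ0
    · exact Summable.of_finite
    · refine (zero J).congr fun m => ?_
      simp [_root_.hPow, hJ0.ne']
  | succ K ih =>
    refine (sum (Finset.HasAntidiagonal.antidiagonal J) (F := fun ij =>
      _root_.concatMul ij.1 (hPos η ij.1) (_root_.hPow η K ij.2)) fun ij hij => ?_).congr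
        fun m => by rw [_root_.hPow, Finset.sum_apply]
    rw [Finset.HasAntidiagonal.mem_antidiagonal] at hij
    have h2 : WordSummable c φ ij.1 (hPos η ij.1) := by
      rcases Nat.eq_zero_or_pos ij.1 with h0 | h0
      · exact (zero _).congr fun m => by simp [hPos, h0]
      · exact (h ij.1 h0 (by omega)).congr fun m => by simp [hPos, h0.ne']
    exact hij ▸ h2.concatMul (ih (by omega)) (dependsOnFirst_hPos η ij.1)

lemma gAux {η : ℝ} {L : ℕ}
    (h : ∀ j : ℕ, 1 ≤ j → j ≤ L → WordSummable c φ j (hFun j η))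
    (hres : ∀ {N : ℕ} (m : Fin N → ℕ), NonResonant (φ ∘ m) η L)
    (K : ℕ) {J : ℕ} (hJ1 : 1 ≤ J) (hJ : J ≤ L) : WordSummable c φ J (gAux J K η) := by
  refine (const_mul (sum Finset.univ fun σ _ => (hPow h K hJ).comp_perm σ)
    ((Nat.factorial J : ℝ)⁻¹ * (2 * (-1) ^ K * η⁻¹ ^ J))).congr fun m => ?_
  rw [padFin_eq_extendZero, gAux_eq_sum_hPow
    (fun J' K' h1 h2 h3 => hres m J' K' h1 h2 (h3.trans hJ)) hJ1 K]
  simp only [extendZero_permute]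

lemma GFun {η : ℝ} {L J : ℕ}
    (h : ∀ j K : ℕ, 1 ≤ j → j ≤ L → WordSummable c φ j (_root_.gAux j K η))
    {star : ℕ → ℕ} (hs : Function.Involutive star)
    (hc : ∀ k, c (star k) = starRingEnd ℂ (c k)) (hφ : ∀ k, φ (star k) = -φ k)
    (hJ : J ≤ L + 1) : WordSummable c φ J (GFun J η) := by
  refine sum _ fun j hj => sum _ fun k _ => const_mul ?_ _
  rw [Finset.mem_Icc] at hj
  have key := symProd (p := fun η' ψ => _root_.gAux j (k : ℤ) η' ψ)
    (q := fun η' ψ => _root_.gAux (J - j) (k : ℤ) η' (fun i => -ψ i))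
    (h j k hj.1 (by omega)) ((h (J - j) k (by omega) (by omega)).neg_args hs hc hφ)
    (dependsOnFirst_gAux j k η)
  have e : j + (J - j) = J := by omega
  rwa [e] at key

end WordSummable

theorem stmt9 (p : ℕ) (hp : 2 ≤ p) (η : ℝ) (hη : 0 < η)
    (c : ℕ → ℂ) (φ : ℕ → ℝ)
    (hc : Summable fun k => ‖c k‖)
    (hsd : ∀ j : ℕ, 1 ≤ j → j ≤ p - 1 →
      Summable fun m : Fin j → ℕ => ‖∏ i, c (m i)‖ * |hFun j η (padFin j φ m)|)
    (hres : ∀ K J : ℕ, 1 ≤ K → K ≤ J → J ≤ p → ∀ (m : Fin J → ℕ) (ε : Fin J → ℝ),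
      (∀ i, ε i = 1 ∨ ε i = -1) → (K : ℝ) * η ≠ ∑ i, ε i * φ (m i))
    (hinv : ∃ star : ℕ → ℕ, Function.Involutive star ∧
      (∀ k, c (star k) = starRingEnd ℂ (c k)) ∧ (∀ k, φ (star k) = -φ k)) :
    (∀ J K : ℕ, 1 ≤ K → K ≤ J → J ≤ p - 1 →
      Summable fun m : Fin J → ℕ =>
        ‖∏ i, c (m i)‖ * |gAux J (K : ℤ) η (padFin J φ m)|) ∧
    (∀ J : ℕ, 2 ≤ J → J ≤ p →
      Summable fun m : Fin J → ℕ =>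
        ‖∏ i, c (m i)‖ * |GFun J η (padFin J φ m)|) := by
  obtain ⟨star, hs, hcs, hφs⟩ := hinv
  have hnr : ∀ {N : ℕ} (m : Fin N → ℕ), NonResonant (φ ∘ m) η (p - 1) := by
    intro N m J K hK hKJ hJ w
    rw [sum_range_extendZero, sub_ne_zero]
    simpa using hres K J hK hKJ (by omega) (m ∘ w) (fun _ => 1) fun _ => Or.inl rfl
  have hg : ∀ J K : ℕ, 1 ≤ J → J ≤ p - 1 → WordSummable c φ J (gAux J K η) :=
    fun J K hJ1 hJ => WordSummable.gAux hsd hnr K hJ1 hJ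
  exact ⟨fun J K hK hKJ hJ => hg J K (hK.trans hKJ) hJ,
    fun J _ hJ => WordSummable.GFun hg hs hcs hφs (by omega)⟩
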